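/- There exists a family (X_i)_{i ∈ I} of compact Hausdorff topological spaces with |I| = 2^𝔠 (where 𝔠 = 2^ℵ₀ is the cardinality of the continuum) such that each X_i is separable, extremally disconnected, and rigid (the identity is the only homeomorphism of X_i onto itself), and for distinct i, j ∈ I the spaces X_i and X_j are not homeomorphic. -/

import Mathlib

open Cardinal TopologicalSpace
open Filter Set

namespace RigidED

/-- rows and columns of the matrix -/
abbrev R := ℕ → Bool

/-- the countable set carrying the independent matrix -/
abbrev NN := Σ n : ℕ, ((Fin n → Bool) → (Fin n → Bool))

/-- the independent matrix -/
def E (x y : R) : Set NN := {p | p.2 (fun i : Fin p.1 => x i) = (fun i : Fin p.1 => y i)}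

/-- the base filter -/
def F0 : Filter NN := comap Sigma.fst atTop

/-- finite conditions -/
def cnd (a : Finset R) (y : R → R) : Set NN := {p | ∀ x ∈ a, p ∈ E x (y x)}

/-- independence of the rows in `I` modulo `F` -/
def Indep (F : Filter NN) (I : Set R) : Prop :=
  ∀ a : Finset R, (a : Set R) ⊆ I → ∀ y : R → R, (F ⊓ 𝓟 (cnd a y)).NeBot

lemma Indep.mono {F F' : Filter NN} {I I' : Set R} (h : Indep F I) (hF : F ≤ F') (hI : I' ⊆ I) :
    Indep F' I' := fun a ha y => (h a (ha.trans hI) y).mono (inf_le_inf_right _ hF)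

lemma F0_mem (k : ℕ) : {p : NN | k ≤ p.1} ∈ F0 := preimage_mem_comap (Ici_mem_atTop k)

lemma F0_mem_iff {Z : Set NN} : Z ∈ F0 ↔ ∃ k, ∀ p : NN, k ≤ p.1 → p ∈ Z := by
  unfold F0
  rw [mem_comap]
  constructor
  · rintro ⟨t, ht, h⟩
    obtain ⟨k, hk⟩ := mem_atTop_sets.1 ht
    exact ⟨k, fun p hp => h (hk _ hp)⟩
  · rintro ⟨k, hk⟩
    exact ⟨Ici k, Ici_mem_atTop k, fun p hp => hk p hp⟩

lemma exists_diff (x y : R) : ∃ k : ℕ, x ≠ y → ∃ i < k, x i ≠ y i := by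
  by_cases h : x = y
  · exact ⟨0, fun h' => absurd h h'⟩
  · obtain ⟨i, hi⟩ := Function.ne_iff.1 h
    exact ⟨i + 1, fun _ => ⟨i, Nat.lt_succ_self i, hi⟩⟩

lemma E_ad {x y y' : R} (h : y ≠ y') : (E x y ∩ E x y')ᶜ ∈ F0 := by
  obtain ⟨k, hk⟩ := exists_diff y y'
  obtain ⟨i, hi, hne⟩ := hk h
  refine F0_mem_iff.2 ⟨k, fun p hp hh => hne ?_⟩
  have := hh.1.symm.trans hh.2
  exact congrFun this ⟨i, by omega⟩

lemma indep_F0 : Indep F0 univ := by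
  intro a _ y
  rw [inf_principal_neBot_iff]
  intro U hU
  obtain ⟨k, hk⟩ := F0_mem_iff.1 hU
  choose d hd using exists_diff
  let n := k + (a ×ˢ a).sup (fun q => d q.1 q.2)
  have hinj : ∀ x ∈ a, ∀ x' ∈ a, (fun i : Fin n => x i) = (fun i : Fin n => x' i) → x = x' := by
    intro x hx x' hx' h
    by_contra hne
    obtain ⟨i, hi, hne'⟩ := hd x x' hne
    have : d x x' ≤ (a ×ˢ a).sup (fun q => d q.1 q.2) :=
      Finset.le_sup (f := fun q : R × R => d q.1 q.2) (b := (x, x')) (by simp [hx, hx'])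
    exact hne' (congrFun h ⟨i, by omega⟩)
  classical
  let g : (Fin n → Bool) → (Fin n → Bool) := fun v =>
    if h : ∃ x ∈ a, (fun i : Fin n => x i) = v then fun i => y h.choose i else fun _ => false
  refine ⟨⟨n, g⟩, hk _ (Nat.le_add_right _ _), ?_⟩
  intro x hx
  have h : ∃ x' ∈ a, (fun i : Fin n => x' i) = (fun i : Fin n => x i) := ⟨x, hx, rfl⟩
  change g (fun i => x i) = _
  have h2 : h.choose = x := hinj _ h.choose_spec.1 _ hx h.choose_spec.2
  simp only [g, dif_pos h]
  rw [h2]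

lemma indep_iInf {ι : Type*} {F : Filter NN} {I : Set R} (D : ι → Set NN)
    (h : ∀ J : Finset ι, Indep (F ⊓ 𝓟 (⋂ i ∈ J, D i)) I) : Indep (F ⊓ ⨅ i, 𝓟 (D i)) I := by
  classical
  intro a ha y
  have e : (F ⊓ ⨅ i, 𝓟 (D i)) ⊓ 𝓟 (cnd a y) =
      ⨅ J : Finset ι, ((F ⊓ 𝓟 (⋂ i ∈ J, D i)) ⊓ 𝓟 (cnd a y)) := by
    rw [iInf_eq_iInf_finset, inf_iInf, iInf_inf]
    simp only [iInf_principal_finset]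
  rw [e]
  refine iInf_neBot_of_directed ?_ (fun J => h J a ha y)
  intro J J'
  refine ⟨J ∪ J', ?_, ?_⟩ <;>
  · refine inf_le_inf_right _ (inf_le_inf_left _ (principal_mono.2 ?_))
    refine biInter_subset_biInter_left ?_
    intro i hi
    simp at hi ⊢
    tauto

lemma indep_cnd {F : Filter NN} {I : Set R} (h : Indep F I) (a : Finset R) (ha : (a : Set R) ⊆ I)
    (y : R → R) : Indep (F ⊓ 𝓟 (cnd a y)) (I \ a) := by
  classical
  intro b hb z
  have := h (a ∪ b) (by
    intro x hx
    simp at hx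
    rcases hx with hx | hx
    · exact ha hx
    · exact (hb hx).1) (a.piecewise y z)
  refine this.mono ?_
  rw [inf_assoc, inf_principal]
  refine inf_le_inf_left _ (principal_mono.2 ?_)
  intro p hp
  refine ⟨fun x hx => ?_, fun x hx => ?_⟩
  · have := hp x (by simp [hx])
    simpa [hx] using this
  · have := hp x (by simp [hx])
    have h' : x ∉ a := fun h' => (hb hx).2 h'
    simpa [h'] using this

/-- if a set cannot be added, its complement is forced by a finite condition -/
lemma bad_force {F : Filter NN} {I : Set R} {W : Set NN}
    (hbad : ∀ (a : Finset R) (y : R → R), (a : Set R) ⊆ I →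
      ¬ Indep (F ⊓ 𝓟 (cnd a y ∩ Wᶜ)) (I \ a)) (a : Finset R) (y : R → R) (ha : (a : Set R) ⊆ I) :
    ∃ (b : Finset R) (z : R → R), (b : Set R) ⊆ I ∧ cnd b z ⊆ cnd a y ∧ W ∈ F ⊓ 𝓟 (cnd b z) := by
  classical
  have := hbad a y ha
  unfold Indep at this
  push Not at this
  obtain ⟨b, hb, z, hz⟩ := this
  have hmem : ∀ p ∈ cnd (a ∪ b) (a.piecewise y z), p ∈ cnd a y ∧ p ∈ cnd b z := by
    intro p hp
    refine ⟨fun x hx => ?_, fun x hx => ?_⟩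
    · have := hp x (by simp [hx])
      simpa [hx] using this
    · have := hp x (by simp [hx])
      have h' : x ∉ a := fun h' => (hb hx).2 h'
      simpa [h'] using this
  refine ⟨a ∪ b, a.piecewise y z, ?_, fun p hp => (hmem p hp).1, ?_⟩
  · intro x hx
    simp at hx
    rcases hx with hx | hx
    · exact ha hx
    · exact (hb hx).1
  · have hz' : F ⊓ 𝓟 (cnd a y ∩ Wᶜ) ⊓ 𝓟 (cnd b z) = ⊥ := by
      simpa [neBot_iff] using hz
    rw [inf_assoc, inf_principal] at hz'
    have h3 : (cnd a y ∩ Wᶜ ∩ cnd b z)ᶜ ∈ F := by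
      rw [← Filter.empty_mem_iff_bot, mem_inf_principal] at hz'
      filter_upwards [hz'] with p hp hq using hp hq
    rw [mem_inf_principal]
    filter_upwards [h3] with p hp hq
    by_contra hW
    exact hp ⟨⟨(hmem p hq).1, hW⟩, (hmem p hq).2⟩

/-- what a task `(r, f)` requires -/
def Done {S : Type} (F : S → Filter NN) (r : S) (f : S → NN → NN) : Prop :=
  (∃ A ∈ F r, ∀ t, t ≠ r → (f t ⁻¹' A)ᶜ ∈ F t) ∨
    ∃ t, t ≠ r ∧ ∃ Z : Set NN, f t ⁻¹' Z ∈ F t ∧ Zᶜ ∈ F0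

lemma Done.mono {S : Type} {F F' : S → Filter NN} {r : S} {f : S → NN → NN} (h : Done F r f)
    (hF : ∀ s, F' s ≤ F s) : Done F' r f := by
  rcases h with ⟨A, hA, h⟩ | ⟨t, ht, Z, hZ, hZ'⟩
  · exact Or.inl ⟨A, hF _ hA, fun t ht => hF _ (h t ht)⟩
  · exact Or.inr ⟨t, ht, Z, hF _ hZ, hZ'⟩

lemma uncountable_R : ¬ (univ : Set R).Countable := by
  rw [countable_univ_iff, not_countable_iff, ← Cardinal.aleph0_lt_mk_iff]
  simpa using Cardinal.cantor ℵ₀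

lemma step {S : Type} [Countable S] (F : S → Filter NN) (I : S → Set R)
    (hind : ∀ s, Indep (F s) (I s)) (r : S) (hr : (I r).Nonempty) (f : S → NN → NN) :
    ∃ (D : S → Set NN) (a : S → Finset R), (∀ s, Indep (F s ⊓ 𝓟 (D s)) (I s \ a s)) ∧
      Done (fun s => F s ⊓ 𝓟 (D s)) r f := by
  classical
  obtain ⟨x0, hx0⟩ := hr
  let bad : S → R → Prop := fun t β => ∀ (a : Finset R) (y : R → R), (a : Set R) ⊆ I t →
      ¬ Indep (F t ⊓ 𝓟 (cnd a y ∩ (f t ⁻¹' (E x0 β))ᶜ)) (I t \ a)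
  by_cases hb : ∃ t, t ≠ r ∧ ∃ β β', β ≠ β' ∧ bad t β ∧ bad t β'
  · obtain ⟨t, ht, β, β', hne, h1, h2⟩ := hb
    obtain ⟨a1, y1, ha1, -, hm1⟩ := bad_force h1 ∅ (fun x => x) (by simp)
    obtain ⟨a2, y2, ha2, hsub, hm2⟩ := bad_force h2 a1 y1 ha1
    refine ⟨fun s => if s = t then cnd a2 y2 else univ, fun s => if s = t then a2 else ∅, ?_, ?_⟩
    · intro s
      by_cases hs : s = t
      · subst hs
        simpa using indep_cnd (hind s) a2 ha2 y2
      · simpa [hs] using hind s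
    · refine Or.inr ⟨t, ht, E x0 β ∩ E x0 β', ?_, E_ad hne⟩
      have hm1' : f t ⁻¹' (E x0 β) ∈ F t ⊓ 𝓟 (cnd a2 y2) :=
        (inf_le_inf_left _ (principal_mono.2 hsub)) hm1
      simpa using inter_mem hm1' hm2
  · push Not at hb
    have hcount : ({β | ∃ t, t ≠ r ∧ bad t β} : Set R).Countable := by
      have : {β | ∃ t, t ≠ r ∧ bad t β} = ⋃ t : S, {β | t ≠ r ∧ bad t β} := by
        ext; simp
      rw [this]
      refine countable_iUnion fun t => Set.Subsingleton.countable ?_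
      intro β h β' h'
      by_contra hne
      exact hb t h.1 β β' hne h.2 h'.2
    obtain ⟨β, hβ⟩ : ∃ β : R, ∀ t, t ≠ r → ¬ bad t β := by
      by_contra hcon
      push Not at hcon
      apply uncountable_R
      refine hcount.mono fun β _ => hcon β
    have : ∀ t, ∃ (D : Set NN) (a : Finset R), Indep (F t ⊓ 𝓟 D) (I t \ a) ∧
        (t = r → E x0 β ∈ F t ⊓ 𝓟 D) ∧ (t ≠ r → (f t ⁻¹' (E x0 β))ᶜ ∈ F t ⊓ 𝓟 D) := by
      intro t
      by_cases ht : t = r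
      · subst ht
        refine ⟨cnd {x0} (fun _ => β), {x0}, indep_cnd (hind t) _ (by simpa using hx0) _, ?_,
          fun h => absurd rfl h⟩
        intro _
        apply mem_inf_of_right
        rw [mem_principal]
        intro p hp
        exact hp x0 (by simp)
      · have := hβ t ht
        simp only [bad] at this
        push Not at this
        obtain ⟨a, y, ha, h⟩ := this
        refine ⟨_, a, h, fun h => absurd h ht, fun _ => ?_⟩
        apply mem_inf_of_right
        rw [mem_principal]
        exact inter_subset_right
    choose D a h1 h2 h3 using this
    exact ⟨D, a, h1, Or.inl ⟨E x0 β, h2 r rfl, h3⟩⟩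

/-- choice along a well-order -/
lemma wf_choice {T X : Type} (lt : T → T → Prop) (wf : WellFounded lt) [Nonempty X]
    (P : T → (T → X) → Prop)
    (hcongr : ∀ τ g g', (∀ η, lt η τ → g η = g' η) → g τ = g' τ → P τ g → P τ g')
    (h : ∀ τ (g : T → X), (∀ η, lt η τ → P η g) → ∃ g', (∀ η, lt η τ → g' η = g η) ∧ P τ g')
    (trans : ∀ a b c, lt a b → lt b c → lt a c) :
    ∃ g : T → X, ∀ τ, P τ g := by
  classical
  let x0 : X := Classical.arbitrary X
  have irr : ∀ a, ¬ lt a a := fun a h => (wf.irrefl.irrefl a) h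
  let ext : (τ : T) → ((η : T) → lt η τ → X) → T → X := fun τ rec η =>
    if h : lt η τ then rec η h else x0
  let Ex : (τ : T) → (T → X) → Prop := fun τ g0 =>
    ∃ g', (∀ η, lt η τ → g' η = g0 η) ∧ P τ g'
  let step : (τ : T) → ((η : T) → lt η τ → X) → X := fun τ rec =>
    if h : Ex τ (ext τ rec) then h.choose τ else x0
  let g : T → X := wf.fix step
  have hg : ∀ τ, g τ = step τ (fun η _ => g η) := fun τ => wf.fix_eq step τ
  refine ⟨g, fun τ => ?_⟩
  induction τ using wf.induction with
  | _ τ ih =>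
    let g0 := ext τ (fun η _ => g η)
    have hg0 : ∀ η, lt η τ → g0 η = g η := fun η hη => by simp [g0, ext, hη]
    have hex : Ex τ g0 := by
      apply h
      intro η hη
      refine hcongr η g g0 (fun ζ hζ => (hg0 ζ (trans _ _ _ hζ hη)).symm) (hg0 η hη).symm (ih η hη)
    have : g τ = hex.choose τ := by
      rw [hg]
      simp only [step]
      rw [dif_pos hex]
    refine hcongr τ hex.choose g (fun η hη => ?_) this.symm hex.choose_spec.2
    rw [hex.choose_spec.1 η hη, hg0 η hη]


lemma indep_of_good {S T : Type} [LinearOrder T] {G : Filter NN} {I0 : Set R}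
    (hind : Indep G I0) (D : T → S → Set NN) (a : T → S → Finset R) (Q : Set T) (s : S)
    (hQ : ∀ η ∈ Q, Indep ((G ⊓ ⨅ ζ : Iio η, 𝓟 (D ζ s)) ⊓ 𝓟 (D η s))
      ((I0 \ ⋃ ζ : Iio η, (a ζ s : Set R)) \ a η s)) :
    Indep (G ⊓ ⨅ η : Q, 𝓟 (D η s)) (I0 \ ⋃ η ∈ {η | ∃ ζ ∈ Q, η ≤ ζ}, (a η s : Set R)) := by
  apply indep_iInf
  intro J
  rcases J.eq_empty_or_nonempty with rfl | hJ
  · simp only [Finset.notMem_empty, iInter_of_empty, iInter_univ, principal_univ, inf_top_eq]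
    exact hind.mono le_rfl sdiff_subset
  · set m := J.max' hJ with hm
    refine (hQ m m.2).mono ?_ ?_
    · rw [inf_assoc]
      refine inf_le_inf_left _ ?_
      rw [← iInf_principal_finset]
      refine le_iInf₂ fun η hη => ?_
      rcases (J.le_max' η hη).lt_or_eq with h | h
      · exact inf_le_left.trans (iInf_le (fun ζ : Iio (m : T) => 𝓟 (D ζ s)) ⟨η, h⟩)
      · rw [h]
        exact inf_le_right
    · rintro x ⟨hx, hx'⟩
      simp only [mem_iUnion, not_exists] at hx'
      refine ⟨⟨hx, ?_⟩, hx' m ⟨m, m.2, le_rfl⟩⟩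
      simp only [mem_iUnion, not_exists]
      exact fun ζ => hx' ζ ⟨m, m.2, le_of_lt ζ.2⟩

lemma exists_filters {S T : Type} [Countable S] [LinearOrder T] [WellFoundedLT T]
    (hT : ∀ τ : T, #(Iio τ) < 𝔠) (task : T → S × (S → NN → NN))
    {G : Filter NN} {I0 : Set R} (hI : 𝔠 ≤ #I0) (hind : Indep G I0) :
    ∃ F : S → Filter NN, (∀ s, (F s).NeBot) ∧ (∀ s, F s ≤ G) ∧
      ∀ τ, Done F (task τ).1 (task τ).2 := by
  classical
  let X := (S → Set NN) × (S → Finset R)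
  let Fl : T → (T → X) → S → Filter NN := fun τ g s => G ⊓ ⨅ ζ : Iio τ, 𝓟 ((g ζ).1 s)
  let P : T → (T → X) → Prop := fun τ g =>
    (∀ s, Indep (Fl τ g s ⊓ 𝓟 ((g τ).1 s))
      ((I0 \ ⋃ ζ : Iio τ, ((g ζ).2 s : Set R)) \ (g τ).2 s)) ∧
    Done (fun s => Fl τ g s ⊓ 𝓟 ((g τ).1 s)) (task τ).1 (task τ).2
  have hFl : ∀ τ g g', (∀ η, η < τ → g η = g' η) → Fl τ g = Fl τ g' := by
    intro τ g g' h
    funext s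
    simp only [Fl]
    congr 1
    exact iInf_congr fun ζ => by rw [h ζ ζ.2]
  have hU : ∀ τ (g g' : T → X) s, (∀ η, η < τ → g η = g' η) →
      (⋃ ζ : Iio τ, ((g ζ).2 s : Set R)) = ⋃ ζ : Iio τ, ((g' ζ).2 s : Set R) := by
    intro τ g g' s h
    exact iUnion_congr fun ζ => by rw [h ζ ζ.2]
  obtain ⟨g, hg⟩ := wf_choice (T := T) (X := X) (· < ·) wellFounded_lt P (by
      intro τ g g' h h' hP
      simp only [P] at hP ⊢
      rw [← hFl τ g g' h, ← h']
      refine ⟨fun s => ?_, hP.2⟩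
      rw [← hU τ g g' s h]
      exact hP.1 s) (by
      intro τ g ih
      have hi : ∀ s, Indep (Fl τ g s) (I0 \ ⋃ ζ : Iio τ, ((g ζ).2 s : Set R)) := by
        intro s
        have := indep_of_good hind (fun η => (g η).1) (fun η => (g η).2) (Iio τ) s
          (fun η hη => (ih η hη).1 s)
        refine this.mono le_rfl ?_
        refine sdiff_subset_sdiff_right ?_
        intro x hx
        simp only [mem_iUnion, mem_ofPred_eq] at hx ⊢
        obtain ⟨η, ⟨ζ, hζ, hle⟩, h⟩ := hx
        exact ⟨⟨η, lt_of_le_of_lt hle hζ⟩, h⟩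
      obtain ⟨D, a, h1, h2⟩ := step (Fl τ g) _ hi (task τ).1 (by
        by_contra hemp
        rw [not_nonempty_iff_eq_empty, sdiff_eq_empty] at hemp
        have h1 := (Cardinal.mk_le_mk_of_subset hemp).trans (Cardinal.mk_iUnion_le _)
        have h2 : #(Iio τ) * (⨆ i : Iio τ, #((((g i).2 (task τ).1 : Finset R) : Set R))) ≤
            #(Iio τ) * ℵ₀ := by
          refine mul_le_mul_right ?_ _
          exact ciSup_le' fun i => by simp
        have h3 : #(Iio τ) * ℵ₀ < 𝔠 :=
          Cardinal.mul_lt_of_lt Cardinal.aleph0_le_continuum (hT τ) Cardinal.aleph0_lt_continuum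
        exact absurd (hI.trans (h1.trans h2)) (not_le.2 h3)) (task τ).2
      refine ⟨Function.update g τ (D, a), fun η hη => Function.update_of_ne hη.ne _ _, ?_⟩
      have e := hFl τ g (Function.update g τ (D, a))
        (fun η hη => (Function.update_of_ne hη.ne _ _).symm)
      have e' := fun s => hU τ g (Function.update g τ (D, a)) s
        (fun η hη => (Function.update_of_ne hη.ne _ _).symm)
      simp only [P]
      rw [← e, Function.update_self]
      refine ⟨fun s => ?_, h2⟩
      rw [← e' s]
      exact h1 s) (fun a b c => lt_trans)
  refine ⟨fun s => G ⊓ ⨅ η : (univ : Set T), 𝓟 ((g η).1 s), fun s => ?_, fun s => inf_le_left,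
    fun τ => (hg τ).2.mono fun s => ?_⟩
  · have := indep_of_good hind (fun η => (g η).1) (fun η => (g η).2) univ s
          (fun η hη => (hg η).1 s)
    exact (this ∅ (by simp) (fun x => x)).mono inf_le_left
  · simp only [Fl]
    refine le_inf (inf_le_inf_left _ ?_) (inf_le_right.trans ?_)
    · exact le_iInf fun ζ => iInf_le (fun η : (univ : Set T) => 𝓟 ((g η).1 s)) ⟨ζ, trivial⟩
    · exact iInf_le (fun η : (univ : Set T) => 𝓟 ((g η).1 s)) ⟨τ, trivial⟩

lemma card_tasks {S : Type} [Countable S] : #(S × (S → NN → NN)) ≤ 𝔠 := by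
  have h1 : #(S → NN → NN) ≤ 𝔠 := by
    have h : #NN ≤ ℵ₀ := Cardinal.mk_le_aleph0
    have hs : #S ≤ ℵ₀ := Cardinal.mk_le_aleph0
    calc #(S → NN → NN) = (#NN ^ #NN) ^ #S := by simp
      _ ≤ (𝔠 ^ ℵ₀) ^ ℵ₀ := by
        have h0 : #NN ≠ 0 := Cardinal.mk_ne_zero_iff.2 ⟨⟨0, fun x => x⟩⟩
        refine (Cardinal.power_le_power_right ?_).trans (Cardinal.power_le_power_left ?_ hs)
        · exact (Cardinal.power_le_power_left h0 h).trans
            (Cardinal.power_le_power_right (h.trans Cardinal.aleph0_le_continuum))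
        · simp [Cardinal.continuum_ne_zero]
      _ = 𝔠 := by simp
  rw [Cardinal.mk_prod]
  simp only [Cardinal.lift_id]
  calc #S * #(S → NN → NN) ≤ ℵ₀ * 𝔠 := mul_le_mul' Cardinal.mk_le_aleph0 h1
    _ = 𝔠 := by simp

lemma exists_ultra {S : Type} [Countable S] {G : Filter NN} {I0 : Set R}
    (hI : 𝔠 ≤ #I0) (hind : Indep G I0) :
    ∃ u : S → Ultrafilter NN, (∀ s, (u s : Filter NN) ≤ G) ∧
      ∀ (r : S) (f : S → NN → NN), (∀ t, t ≠ r → ∀ n, f t ⁻¹' {n} ∉ u t) →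
        ∃ A ∈ u r, ∀ t, t ≠ r → f t ⁻¹' A ∉ u t := by
  obtain ⟨lo, wo, hlo⟩ := Cardinal.exists_ord_eq_type_lt (S × (S → NN → NN))
  obtain ⟨F, hF, hFG, hD⟩ := exists_filters (S := S) (T := S × (S → NN → NN))
    (fun τ => (Cardinal.mk_Iio_lt τ hlo).trans_le card_tasks) id hI hind
  refine ⟨fun s => Ultrafilter.of (F s), fun s => (Ultrafilter.of_le _).trans (hFG s), ?_⟩
  intro r f hf
  have := (hD (r, f)).mono (F' := fun s => Ultrafilter.of (F s)) (fun s => Ultrafilter.of_le _)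
  rcases this with ⟨A, hA, h⟩ | ⟨t, ht, Z, hZ, hZ'⟩
  · exact ⟨A, hA, fun t ht => Ultrafilter.compl_mem_iff_notMem.1 (h t ht)⟩
  · exfalso
    obtain ⟨k, hk⟩ := F0_mem_iff.1 hZ'
    have hfin : Z.Finite := by
      have : Z ⊆ Set.range (fun q : (Σ i : Fin k, ((Fin i → Bool) → (Fin i → Bool))) =>
          (⟨q.1, q.2⟩ : NN)) := by
        intro p hp
        have hlt : p.1 < k := by
          by_contra h
          exact hk p (not_lt.1 h) hp
        exact ⟨⟨⟨p.1, hlt⟩, p.2⟩, rfl⟩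
      exact (Set.finite_range _).subset this
    have hZ2 : (⋃ n ∈ Z, f t ⁻¹' {n}) ∈ Ultrafilter.of (F t) := by
      refine mem_of_superset hZ ?_
      intro m hm
      simpa using hm
    obtain ⟨n, hn, hn'⟩ := (Ultrafilter.finite_biUnion_mem_iff hfin).1 hZ2
    exact hf t ht n hn'

/-- the diversified base filter -/
def base (x : Set R) : Filter NN := by
  classical
  exact F0 ⊓ ⨅ z : {z : R // z 0 = true},
    𝓟 (E z (if (z : R) ∈ x then (fun _ => true) else (fun _ => false)))

lemma indep_base (x : Set R) : Indep (base x) {z | z 0 = false} := by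
  classical
  unfold base
  apply indep_iInf
  intro J
  have := indep_cnd indep_F0 (J.map ⟨Subtype.val, Subtype.val_injective⟩) (subset_univ _)
    (fun z => if z ∈ x then (fun _ => true) else (fun _ => false))
  refine this.mono (inf_le_inf_left _ (principal_mono.2 ?_)) ?_
  · intro p hp
    simp only [mem_iInter]
    intro z hz
    exact hp z (by simpa using hz)
  · intro z hz
    refine ⟨trivial, ?_⟩
    simp only [mem_ofPred_eq] at hz
    simp [hz]

lemma base_diff {x x' : Set R} {z : R} (hz : z 0 = true) (h : z ∈ x) (h' : z ∉ x') :
    ∃ A : Set NN, A ∈ base x ∧ Aᶜ ∈ base x' := by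
  classical
  refine ⟨E z (fun _ => true), ?_, ?_⟩
  · unfold base
    apply mem_inf_of_right
    apply mem_iInf_of_mem ⟨z, hz⟩
    simp [h]
  · have h1 : E z (fun _ => false) ∈ base x' := by
      unfold base
      apply mem_inf_of_right
      apply mem_iInf_of_mem ⟨z, hz⟩
      simp [h']
    have h2 : (E z (fun _ => true) ∩ E z (fun _ => false))ᶜ ∈ base x' := by
      unfold base
      apply mem_inf_of_left
      apply E_ad
      intro h
      simpa using congrFun h 0
    filter_upwards [h1, h2] with p hp hp' hq
    exact hp' ⟨hq, hp⟩

lemma card_half (b : Bool) : #{z : R // z 0 = b} = 𝔠 := by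
  have e : {z : R // z 0 = b} ≃ R :=
    { toFun := fun z n => z.1 (n + 1)
      invFun := fun z => ⟨fun n => Nat.casesOn n b z, rfl⟩
      left_inv := by
        rintro ⟨z, hz⟩
        ext n
        cases n <;> simp [hz]
      right_inv := fun z => rfl }
  rw [Cardinal.mk_congr e]
  simp


section Topology

abbrev Sy := List NN

/-- the countable space of finite sequences, topologised by ultrafilters -/
def Sq (_u : Sy → Ultrafilter NN) : Type := Sy

variable {u w : Sy → Ultrafilter NN}

instance : Countable (Sq u) := inferInstanceAs (Countable (List NN))

instance instTop (u : Sy → Ultrafilter NN) : TopologicalSpace (Sq u) where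
  IsOpen U := ∀ s : Sy, s ∈ (U : Set Sy) → ∀ᶠ m in (u s : Filter NN), (m :: s : Sy) ∈ (U : Set Sy)
  isOpen_univ := fun s _ => Eventually.of_forall fun _ => trivial
  isOpen_inter := fun U V hU hV s hs => (hU s hs.1).and (hV s hs.2)
  isOpen_sUnion := by
    rintro C hC s ⟨U, hU, hs⟩
    filter_upwards [hC U hU s hs] with m hm
    exact ⟨U, hU, hm⟩

/-- view a set of sequences as a subset of the space -/
def toS (u : Sy → Ultrafilter NN) (V : Set Sy) : Set (Sq u) := V

lemma isOpen_toS {V : Set Sy} :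
    IsOpen (toS u V) ↔ ∀ s ∈ V, ∀ᶠ m in (u s : Filter NN), m :: s ∈ V := Iff.rfl

lemma isClosed_toS {V : Set Sy} :
    IsClosed (toS u V) ↔ ∀ s, s ∉ V → ∀ᶠ m in (u s : Filter NN), m :: s ∉ V := by
  rw [← isOpen_compl_iff]
  exact Iff.rfl

instance instED : ExtremallyDisconnected (Sq u) where
  open_closure := by
    intro U hU
    let V : Set Sy := (closure U : Set (Sq u))
    have hUV : U ⊆ closure U := subset_closure
    change IsOpen (toS u V)
    rw [isOpen_toS]
    intro t ht
    by_contra hcon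
    rw [Ultrafilter.eventually_not.symm] at hcon
    have htU : t ∉ (U : Set Sy) := by
      intro htU
      have h1 : ∀ᶠ m in (u t : Filter NN), m :: t ∈ V := by
        filter_upwards [(isOpen_toS (V := U)).1 hU t htU] with m hm
        exact hUV hm
      obtain ⟨m, hm, hm'⟩ := (h1.and hcon).exists
      exact hm' hm
    have hcl : IsClosed (toS u (V \ {t})) := by
      rw [isClosed_toS]
      intro s hs
      by_cases hst : s = t
      · subst hst
        filter_upwards [hcon] with m hm h
        exact hm h.1
      · have hsV : s ∉ V := fun h => hs ⟨h, hst⟩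
        have h2 : IsClosed (toS u V) := isClosed_closure
        filter_upwards [isClosed_toS.1 h2 s hsV] with m hm h
        exact hm h.1
    have hsub : closure U ⊆ toS u (V \ {t}) := by
      refine closure_minimal ?_ hcl
      intro s hs
      refine ⟨hUV hs, ?_⟩
      rintro rfl
      exact htU hs
    exact (hsub ht).2 rfl

/-- the cone above `s` -/
def Cone (s : Sy) : Set Sy := {t | s <:+ t}

/-- nonprincipality -/
def NP (u : Sy → Ultrafilter NN) : Prop := ∀ s n, {m | m ≠ n} ∈ u s

lemma NP.ne (hu : NP u) (t s : Sy) : ∀ᶠ m in (u t : Filter NN), m :: t ≠ s := by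
  cases s with
  | nil => exact Eventually.of_forall fun m => by simp
  | cons n s =>
    filter_upwards [hu t n] with m hm h
    exact hm (by simpa using (List.cons.inj h).1)

lemma clopen_cone (hu : NP u) (s : Sy) : IsClopen (toS u (Cone s)) := by
  constructor
  · rw [isClosed_toS]
    intro t ht
    filter_upwards [hu.ne t s] with m hm h
    rcases List.suffix_cons_iff.1 h with h | h
    · exact hm h.symm
    · exact ht h
  · rw [isOpen_toS]
    intro t ht
    exact Eventually.of_forall fun m => ht.trans (List.suffix_cons m t)

/-- the compactification -/
abbrev Be (u : Sy → Ultrafilter NN) := StoneCech (Sq u)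

/-- the unit -/
def ι (u : Sy → Ultrafilter NN) (s : Sy) : Be u := stoneCechUnit (α := Sq u) s

lemma dense_ι : DenseRange (ι u) := denseRange_stoneCechUnit (α := Sq u)

lemma cont_ι : Continuous (fun s : Sq u => ι u s) := continuous_stoneCechUnit

lemma exists_star {V : Set Sy} (hV : IsClopen (toS u V)) :
    ∃ W : Set (Be u), IsClopen W ∧ ∀ s, ι u s ∈ W ↔ s ∈ V := by
  classical
  let f : Sq u → Bool := fun s => decide (s ∈ toS u V)
  have hf : Continuous f := by
    rw [continuous_discrete_rng]
    intro b
    cases b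
    · have : f ⁻¹' {false} = (toS u V)ᶜ := by ext; simp [f]
      rw [this]
      exact hV.compl.isOpen
    · have : f ⁻¹' {true} = toS u V := by ext; simp [f]
      rw [this]
      exact hV.isOpen
  refine ⟨stoneCechExtend hf ⁻¹' {true},
    (isClopen_discrete _).preimage (continuous_stoneCechExtend hf), fun s => ?_⟩
  have : stoneCechExtend hf (ι u s) = f s := stoneCechExtend_stoneCechUnit hf s
  simp only [mem_preimage, this, f, mem_singleton_iff, decide_eq_true_eq]
  exact Iff.rfl

lemma clopen_trace {W : Set (Be u)} (hW : IsClopen W) : IsClopen (toS u {s | ι u s ∈ W}) :=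
  hW.preimage cont_ι

lemma sub_of_trace {W W' : Set (Be u)} (hW : IsOpen W) (hW' : IsClosed W')
    (h : ∀ s, ι u s ∈ W → ι u s ∈ W') : W ⊆ W' := by
  by_contra hcon
  rw [not_subset] at hcon
  obtain ⟨x, hx, hx'⟩ := hcon
  obtain ⟨s, hs⟩ := dense_ι.exists_mem_open (hW.inter hW'.isOpen_compl) ⟨x, hx, hx'⟩
  exact hs.2 (h s hs.1)

instance instED' : ExtremallyDisconnected (Be u) where
  open_closure := by
    intro O hO
    let U : Set (Sq u) := {s | ι u s ∈ O}
    have hU : IsOpen U := hO.preimage cont_ι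
    have hUV : U ⊆ closure U := subset_closure
    have hc : IsClopen (closure U) := ⟨isClosed_closure, ExtremallyDisconnected.open_closure U hU⟩
    obtain ⟨W, hW, hWt⟩ := exists_star (u := u) (V := (closure U : Set (Sq u))) hc
    have : closure O = W := by
      apply subset_antisymm
      · refine closure_minimal ?_ hW.isClosed
        refine sub_of_trace hO hW.isClosed fun s hs => ?_
        exact (hWt s).2 (hUV hs)
      · refine sub_of_trace hW.isOpen isClosed_closure fun s hs => ?_
        have hs' : (s : Sq u) ∈ closure U := (hWt s).1 hs
        have hcl : IsClosed {s : Sq u | ι u s ∈ closure O} := isClosed_closure.preimage cont_ι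
        have hsub : U ⊆ {s : Sq u | ι u s ∈ closure O} := fun t ht => subset_closure ht
        exact closure_minimal hsub hcl hs'
    rw [this]
    exact hW.isOpen

instance instSep : SeparableSpace (Be u) :=
  ⟨⟨range (ι u), countable_range _, dense_ι⟩⟩

/-- the extension of a clopen set -/
noncomputable def star (u : Sy → Ultrafilter NN) (V : Set Sy) : Set (Be u) := by
  classical
  exact if h : IsClopen (toS u V) then (exists_star h).choose else ∅

lemma star_clopen (V : Set Sy) : IsClopen (star u V) := by
  unfold star
  split_ifs with h
  · exact (exists_star h).choose_spec.1
  · exact isClopen_empty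

lemma mem_star {V : Set Sy} (h : IsClopen (toS u V)) (s : Sy) : ι u s ∈ star u V ↔ s ∈ V := by
  unfold star
  rw [dif_pos h]
  exact (exists_star h).choose_spec.2 s

/-- main genericity property -/
def Gen (u : Sy → Ultrafilter NN) : Prop :=
  ∀ (r : Sy) (f : Sy → NN → NN), (∀ t, t ≠ r → ∀ n, f t ⁻¹' {n} ∉ u t) →
        ∃ A ∈ u r, ∀ t, t ≠ r → f t ⁻¹' A ∉ u t


lemma exists_clopen_union (hu : NP u) (hg : Gen u) (r : Sy) (V : NN → Set Sy) (B : Set Sy)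
    (hV : ∀ n, IsClopen (toS u (V n))) (hdis : ∀ n m s, s ∈ V n → s ∈ V m → n = m)
    (hB : IsClopen (toS u B)) (hVB : ∀ n, V n ⊆ B) (hr : r ∉ B) :
    ∃ A ∈ u r, IsClopen (toS u {s | ∃ n ∈ A, s ∈ V n}) := by
  classical
  let n0 : NN := ⟨0, fun x => x⟩
  let f' : Sy → NN → NN := fun t m => if h : ∃ n, m :: t ∈ V n then h.choose else n0
  have hf' : ∀ t m n, m :: t ∈ V n → f' t m = n := by
    intro t m n hn
    have hex : ∃ n, m :: t ∈ V n := ⟨n, hn⟩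
    simp only [f', dif_pos hex]
    exact hdis _ _ _ hex.choose_spec hn
  let good : Sy → Prop := fun t => (∀ n, t ∉ V n) ∧ ∀ᶠ m in (u t : Filter NN), ∃ n, m :: t ∈ V n
  let f : Sy → NN → NN := fun t => if good t then f' t else id
  obtain ⟨A, hA, hA'⟩ := hg r f (by
    intro t _ n hn
    by_cases hgt : good t
    · simp only [f, if_pos hgt] at hn
      have h1 := isClosed_toS.1 (hV n).isClosed t (hgt.1 n)
      have hn' : ∀ᶠ m in (u t : Filter NN), f' t m = n := hn
      obtain ⟨m, ⟨h1, h2⟩, k, hk⟩ := ((h1.and hn').and hgt.2).exists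
      have := hf' t m k hk
      rw [h2] at this
      subst this
      exact h1 hk
    · simp only [f, if_neg hgt] at hn
      have hn' : ∀ᶠ m in (u t : Filter NN), m = n := hn
      have hne : ∀ᶠ m in (u t : Filter NN), m ≠ n := hu t n
      obtain ⟨m, h1, h2⟩ := (hn'.and hne).exists
      exact h2 h1)
  refine ⟨A, hA, ?_, ?_⟩
  · rw [isClosed_toS]
    intro t ht
    by_cases htV : ∃ n, t ∈ V n
    · obtain ⟨n, hn⟩ := htV
      have hnA : n ∉ A := fun h => ht ⟨n, h, hn⟩
      filter_upwards [isOpen_toS.1 (hV n).isOpen t hn] with m hm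
      rintro ⟨k, hk, hmk⟩
      exact hnA (hdis _ _ _ hm hmk ▸ hk)
    · push Not at htV
      by_cases htr : t = r
      · subst htr
        filter_upwards [isClosed_toS.1 hB.isClosed t hr] with m hm
        rintro ⟨k, hk, hmk⟩
        exact hm (hVB k hmk)
      · by_cases hgt : good t
        · have := hA' t htr
          simp only [f, if_pos hgt] at this
          have h2 : ∀ᶠ m in (u t : Filter NN), ¬ f' t m ∈ A := Ultrafilter.eventually_not.2 this
          filter_upwards [h2] with m hm
          rintro ⟨k, hk, hmk⟩
          rw [hf' t m k hmk] at hm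
          exact hm hk
        · have h2 : ¬ ∀ᶠ m in (u t : Filter NN), ∃ n, m :: t ∈ V n := fun h => hgt ⟨htV, h⟩
          rw [← Ultrafilter.eventually_not] at h2
          filter_upwards [h2] with m hm
          rintro ⟨k, hk, hmk⟩
          exact hm ⟨k, hmk⟩
  · rw [isOpen_toS]
    rintro t ⟨n, hn, ht⟩
    filter_upwards [isOpen_toS.1 (hV n).isOpen t ht] with m hm
    exact ⟨n, hn, hm⟩

/-- the tree generated by a successor predicate above `r` -/
inductive Tr (r : Sy) (Q : Sy → NN → Prop) : Sy → Prop
  | root : Tr r Q r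
  | succ (s : Sy) (m : NN) : Tr r Q s → Q s m → Tr r Q (m :: s)

lemma Tr.suffix {r : Sy} {Q : Sy → NN → Prop} {s : Sy} (h : Tr r Q s) : r <:+ s := by
  induction h with
  | root => exact List.suffix_rfl
  | succ s m _ _ ih => exact ih.trans (List.suffix_cons _ _)

lemma Tr.cases' {r : Sy} {Q : Sy → NN → Prop} {s : Sy} {m : NN} (h : Tr r Q (m :: s)) :
    m :: s = r ∨ (Tr r Q s ∧ Q s m) := by
  cases h with
  | root => exact Or.inl rfl
  | succ _ _ h1 h2 => exact Or.inr ⟨h1, h2⟩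

/-- an initial node of a node of the tree belongs to the tree -/
lemma Tr.down {r : Sy} {Q : Sy → NN → Prop} {t : Sy} (h : Tr r Q t) :
    ∀ s, r <:+ s → s <:+ t → Tr r Q s := by
  induction h with
  | root =>
    intro s h1 h2
    have : s = r := h2.eq_of_length_le h1.length_le
    subst this
    exact Tr.root
  | succ t m ht hQ ih =>
    intro s h1 h2
    rcases List.suffix_cons_iff.1 h2 with h | h
    · subst h
      exact Tr.succ t m ht hQ
    · exact ih s h1 h

lemma cone_cases {s t : Sy} (h : t ∈ Cone s) : t = s ∨ ∃ n, t ∈ Cone (n :: s) := by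
  obtain ⟨p, rfl⟩ := h
  rcases List.eq_nil_or_concat p with rfl | ⟨q, n, rfl⟩
  · exact Or.inl rfl
  · refine Or.inr ⟨n, q, by simp⟩

lemma cone_disj {s t : Sy} {n m : NN} (h : t ∈ Cone (n :: s)) (h' : t ∈ Cone (m :: s)) : n = m := by
  obtain ⟨p, rfl⟩ := h
  obtain ⟨q, hq⟩ := h'
  have := (List.append_inj' hq (by simp)).2
  exact ((List.cons.inj this).1).symm

lemma star_disj {V V' : Set Sy} (hV : IsClopen (toS u V)) (hV' : IsClopen (toS u V'))
    (h : ∀ s, s ∈ V → s ∈ V' → False) (x : Be u) (hx : x ∈ star u V) (hx' : x ∈ star u V') :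
    False := by
  have : star u V ∩ star u V' ⊆ ∅ :=
    sub_of_trace ((star_clopen V).isOpen.inter (star_clopen V').isOpen) isClosed_empty
      (fun s hs => (h s ((mem_star hV s).1 hs.1) ((mem_star hV' s).1 hs.2)).elim)
  exact this ⟨hx, hx'⟩

lemma clopen_tr (hu : NP u) {r : Sy} {Q : Sy → NN → Prop}
    (hQ : ∀ s, Tr r Q s → ∀ᶠ m in (u s : Filter NN), Q s m) :
    IsClopen (toS u {s | Tr r Q s}) := by
  constructor
  · rw [isClosed_toS]
    intro t ht
    filter_upwards [hu.ne t r] with m hm h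
    rcases Tr.cases' h with h | h
    · exact hm h
    · exact ht h.1
  · rw [isOpen_toS]
    intro t ht
    filter_upwards [hQ t ht] with m hm
    exact Tr.succ t m ht hm

/-- a nontrivial homeomorphism moves some nonempty clopen set off itself -/
lemma exists_moved (h : Be u ≃ₜ Be u) (hne : h ≠ Homeomorph.refl _) :
    ∃ A : Set (Be u), IsClopen A ∧ A.Nonempty ∧ ∀ x ∈ A, h x ∉ A := by
  have : ∃ x, h x ≠ x := by
    by_contra hcon
    push Not at hcon
    exact hne (Homeomorph.ext hcon)
  obtain ⟨x, hx⟩ := this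
  obtain ⟨O, O', hO, hO', hxO, hxO', hd⟩ := t2_separation hx
  have hopen : IsOpen (O' ∩ h ⁻¹' O) := hO'.inter (hO.preimage h.continuous)
  obtain ⟨K, hK, hKc, hKs⟩ := exists_mem_nhds_isClosed_subset (hopen.mem_nhds ⟨hxO', hxO⟩)
  have hsub : closure (interior K) ⊆ K := closure_minimal interior_subset hKc
  refine ⟨closure (interior K), ⟨isClosed_closure,
    ExtremallyDisconnected.open_closure _ isOpen_interior⟩,
    ⟨x, subset_closure (mem_interior_iff_mem_nhds.2 hK)⟩, ?_⟩
  intro y hy hy'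
  exact Set.disjoint_left.1 hd (hKs (hsub hy)).2 (hKs (hsub hy')).1

theorem rigid (hu : NP u) (hg : Gen u) (h : Be u ≃ₜ Be u) : h = Homeomorph.refl _ := by
  classical
  by_contra hne
  obtain ⟨A, hA, hAne, hmove⟩ := exists_moved h hne
  let x : Sy → Be u := fun t => h.symm (ι u t)
  let AS : Set Sy := {s | ι u s ∈ A}
  let BS : Set Sy := {t | x t ∈ A}
  have tr_clopen : ∀ W : Set (Be u), IsClopen W → IsClopen (toS u {t | x t ∈ W}) := by
    intro W hW
    exact clopen_trace (hW.preimage h.symm.continuous)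
  have hAS : IsClopen (toS u AS) := clopen_trace hA
  have hdisj : ∀ r ∈ AS, r ∉ BS := by
    intro r hr hr'
    have := hmove _ hr'
    simp only [x, Homeomorph.apply_symm_apply] at this
    exact this hr
  let V : Sy → NN → Set Sy := fun s n => {t | x t ∈ star u (Cone (n :: s)) ∩ A}
  have hVc : ∀ s n, IsClopen (toS u (V s n)) := fun s n => tr_clopen _ ((star_clopen _).inter hA)
  have hex : ∀ s, ∃ D : Set NN, s ∈ AS → (D ∈ u s ∧ IsClopen (toS u {t | ∃ n ∈ D, t ∈ V s n})) := by
    intro s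
    by_cases hs : s ∈ AS
    · obtain ⟨D, h1, h2⟩ := exists_clopen_union hu hg s (V s) BS (hVc s) (by
        intro n m t h1 h2
        by_contra hnm
        exact star_disj (clopen_cone hu _) (clopen_cone hu _)
          (fun s h h' => hnm (cone_disj h h')) _ h1.1 h2.1) (tr_clopen A hA)
        (fun n t ht => ht.2) (hdisj s hs)
      exact ⟨D, fun _ => ⟨h1, h2⟩⟩
    · exact ⟨∅, fun h => absurd h hs⟩
  choose D hD using hex
  obtain ⟨r0, hr0⟩ : ∃ r0, ι u r0 ∈ A := dense_ι.exists_mem_open hA.isOpen hAne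
  obtain ⟨e, he⟩ := exists_surjective_nat Sy
  let Q : Sy → NN → Prop := fun s m => m ∈ D s ∧ m :: s ∈ AS ∧
    x (e (s.length - r0.length)) ∉ star u (Cone (m :: s))
  have hTA : ∀ s, Tr r0 Q s → s ∈ AS := by
    intro s hs
    cases hs with
    | root => exact hr0
    | succ s m _ hQ => exact hQ.2.1
  have hQev : ∀ s, Tr r0 Q s → ∀ᶠ m in (u s : Filter NN), Q s m := by
    intro s hs
    have hs' := hTA s hs
    have h1 : ∀ᶠ m in (u s : Filter NN), m ∈ D s := (hD s hs').1
    have h2 := isOpen_toS.1 hAS.isOpen s hs'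
    have h3 : ∀ᶠ m in (u s : Filter NN),
        x (e (s.length - r0.length)) ∉ star u (Cone (m :: s)) := by
      by_cases hb : ∃ m, x (e (s.length - r0.length)) ∈ star u (Cone (m :: s))
      · obtain ⟨m, hm⟩ := hb
        filter_upwards [hu s m] with k hk hk'
        exact star_disj (clopen_cone hu _) (clopen_cone hu _)
          (fun s h h' => hk (cone_disj h h')) _ hk' hm
      · push Not at hb
        exact Eventually.of_forall hb
    filter_upwards [h1, h2, h3] with m h1 h2 h3 using ⟨h1, h2, h3⟩
  let T : Set Sy := {s | Tr r0 Q s}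
  have hT : IsClopen (toS u T) := clopen_tr hu hQev
  obtain ⟨t, ht⟩ : ∃ t, x t ∈ star u T := by
    have hne : (h.symm ⁻¹' (star u T)).Nonempty :=
      ⟨h (ι u r0), by simpa using (mem_star hT r0).2 Tr.root⟩
    exact dense_ι.exists_mem_open ((star_clopen T).isOpen.preimage h.symm.continuous) hne
  have hstep : ∀ s ∈ T, x t ∈ star u (Cone s) → ∃ n, Q s n ∧ x t ∈ star u (Cone (n :: s)) := by
    intro s hs hx
    by_contra hcon
    push Not at hcon
    have hsA := hTA s hs
    set O : Set Sy := {t | ∃ n ∈ D s, t ∈ V s n} with hOdef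
    have hO : IsClopen (toS u O) := (hD s hsA).2
    have htO : t ∉ O := by
      rintro ⟨n, hn, hn1, hn2⟩
      by_cases hQn : Q s n
      · exact hcon n hQn hn1
      · refine star_disj (clopen_cone hu (n :: s)) hT (fun p hp hp' => hQn ?_) _ hn1 ht
        have hd := Tr.down hp' (n :: s) (hs.suffix.trans (List.suffix_cons _ _)) hp
        rcases Tr.cases' hd with h1 | h1
        · exfalso
          have h2 := hs.suffix.length_le
          rw [← h1] at h2
          simp at h2
        · exact h1.2
    have hP : IsClopen (toS u {p | h (ι u p) ∈ star u O}) :=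
      clopen_trace ((star_clopen O).preimage h.continuous)
    have hsub1 : ∀ n, Q s n → ∀ y ∈ star u (Cone (n :: s)) ∩ A, h y ∈ star u O := by
      intro n hn y hy
      have hs1 : h.symm ⁻¹' (star u (Cone (n :: s)) ∩ A) ⊆ star u O := by
        refine sub_of_trace (((star_clopen _).inter hA).isOpen.preimage h.symm.continuous)
          (star_clopen O).isClosed ?_
        intro p hp
        exact (mem_star hO p).2 ⟨n, hn.1, hp⟩
      exact hs1 (by simpa using hy)
    have hsub2 : ∀ n, Q s n → ∀ p ∈ T, p ∈ Cone (n :: s) → h (ι u p) ∈ star u O := by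
      intro n hn p hp hpc
      exact hsub1 n hn _ ⟨(mem_star (clopen_cone hu _) p).2 hpc, hTA p hp⟩
    have hsO : h (ι u s) ∈ star u O := by
      by_contra hsO
      have h1 := isClosed_toS.1 hP.isClosed s hsO
      obtain ⟨m, h1, h2⟩ := (h1.and (hQev s hs)).exists
      exact h1 (hsub2 m h2 _ (Tr.succ s m hs h2) List.suffix_rfl)
    have hfin : star u T ∩ star u (Cone s) ⊆ h ⁻¹' (star u O) := by
      refine sub_of_trace ((star_clopen T).isOpen.inter (star_clopen _).isOpen)
        ((star_clopen O).isClosed.preimage h.continuous) ?_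
      rintro p ⟨hp1, hp2⟩
      have hp1' : p ∈ T := (mem_star hT p).1 hp1
      rcases cone_cases ((mem_star (clopen_cone hu s) p).1 hp2) with h1 | ⟨n, hn⟩
      · subst h1
        exact hsO
      · refine hsub2 n ?_ p hp1' hn
        have hd := Tr.down hp1' (n :: s) (hs.suffix.trans (List.suffix_cons _ _)) hn
        rcases Tr.cases' hd with h1 | h1
        · exfalso
          have h2 := hs.suffix.length_le
          rw [← h1] at h2
          simp at h2
        · exact h1.2
    have := hfin ⟨ht, hx⟩
    simp only [x, mem_preimage, Homeomorph.apply_symm_apply] at this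
    exact htO ((mem_star hO t).1 this)
  have hall : ∀ k, ∃ s ∈ T, s.length = r0.length + k ∧ x t ∈ star u (Cone s) := by
    intro k
    induction k with
    | zero =>
      refine ⟨r0, Tr.root, rfl, ?_⟩
      have : star u T ⊆ star u (Cone r0) :=
        sub_of_trace (star_clopen T).isOpen (star_clopen _).isClosed fun p hp =>
          (mem_star (clopen_cone hu r0) p).2 (Tr.suffix ((mem_star hT p).1 hp))
      exact this ht
    | succ k ih =>
      obtain ⟨s, hs, hl, hx⟩ := ih
      obtain ⟨n, hn, hx'⟩ := hstep s hs hx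
      exact ⟨n :: s, Tr.succ s n hs hn, by simp [hl]; omega, hx'⟩
  obtain ⟨j, hj⟩ := he t
  obtain ⟨s, hs, hl, hx⟩ := hall j
  obtain ⟨n, hn, hx'⟩ := hstep s hs hx
  apply hn.2.2
  have : s.length - r0.length = j := by omega
  rw [this, hj]
  exact hx'

/-- a homeomorphism respecting the cones forces the ultrafilters to agree somewhere -/
lemma no_cone_homeo (hu : NP u) (hw : NP w) {A : Set NN} (hAu : ∀ s, A ∈ u s)
    (hAw : ∀ s, Aᶜ ∈ w s) (g : Be u ≃ₜ Be w)
    (hg : ∀ s y, y ∈ star u (Cone s) ↔ g y ∈ star w (Cone s)) : False := by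
  let T : Set Sy := {s | Tr [] (fun _ m => m ∈ A) s}
  have hT : IsClopen (toS u T) := clopen_tr hu (fun s _ => hAu s)
  have hop : IsClopen (g.symm ⁻¹' (star u T)) := (star_clopen T).preimage g.symm.continuous
  have hsub : ∀ t, g.symm (ι w t) ∈ star u T → t ∈ T := by
    intro t ht
    by_contra htT
    have h1 : g.symm (ι w t) ∈ star u (Cone t) := by
      rw [hg]
      simpa using (mem_star (clopen_cone hw t) t).2 List.suffix_rfl
    exact star_disj (clopen_cone hu t) hT
      (fun p hp hp' => htT (Tr.down hp' t List.nil_suffix hp)) _ h1 ht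
  obtain ⟨t, ht⟩ : ∃ t, ι w t ∈ g.symm ⁻¹' (star u T) :=
    dense_ι.exists_mem_open hop.isOpen ⟨g (ι u []), by simpa using (mem_star hT []).2 Tr.root⟩
  have h1 := isOpen_toS.1 (clopen_trace hop).isOpen t ht
  have h2 : ∀ᶠ m in (w t : Filter NN), m ∈ Aᶜ := hAw t
  obtain ⟨m, h1, h2⟩ := (h1.and h2).exists
  rcases Tr.cases' (hsub _ h1) with h3 | h3
  · simp at h3
  · exact h2 h3.2

end Topology

/-- index set of the big family -/
abbrev J1 := {z : R // z 0 = true}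

lemma exists_u (x : Set J1) : ∃ u : Sy → Ultrafilter NN,
    (∀ s, (u s : Filter NN) ≤ base (Subtype.val '' x)) ∧ Gen u :=
  exists_ultra (card_half false).ge (indep_base _)

/-- the ultrafilters of the family -/
noncomputable def U (x : Set J1) : Sy → Ultrafilter NN := (exists_u x).choose

lemma U_le (x : Set J1) (s : Sy) : (U x s : Filter NN) ≤ base (Subtype.val '' x) :=
  (exists_u x).choose_spec.1 s

lemma U_gen (x : Set J1) : Gen (U x) := (exists_u x).choose_spec.2

lemma U_np (x : Set J1) : NP (U x) := by
  intro s n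
  apply U_le x s
  unfold base
  apply mem_inf_of_left
  refine F0_mem_iff.2 ⟨n.1 + 1, fun p hp h => ?_⟩
  rw [h] at hp
  omega

lemma U_diff {x x' : Set J1} (h : x ≠ x') : ∃ A : Set NN,
    ((∀ s, A ∈ U x s) ∧ ∀ s, Aᶜ ∈ U x' s) := by
  have key : ∀ {x x' : Set J1} (z : J1), z ∈ x → z ∉ x' → ∃ A : Set NN,
      ((∀ s, A ∈ U x s) ∧ ∀ s, Aᶜ ∈ U x' s) := by
    intro x x' z hz hz'
    obtain ⟨A, h1, h2⟩ := base_diff (x := Subtype.val '' x) (x' := Subtype.val '' x') z.2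
      ⟨z, hz, rfl⟩ (by rintro ⟨z', h1, h2⟩; exact hz' (Subtype.ext h2 ▸ h1))
    exact ⟨A, fun s => U_le x s h1, fun s => U_le x' s h2⟩
  by_cases hs : x ⊆ x'
  · have : ¬ x' ⊆ x := fun h' => h (hs.antisymm h')
    obtain ⟨z, hz, hz'⟩ := not_subset.1 this
    obtain ⟨A, h1, h2⟩ := key z hz hz'
    exact ⟨Aᶜ, h2, by simpa using h1⟩
  · obtain ⟨z, hz, hz'⟩ := not_subset.1 hs
    exact key z hz hz'

/-- homeomorphism relation -/
def rel : Setoid (Set J1) where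
  r x y := Nonempty (Be (U x) ≃ₜ Be (U y))
  iseqv := ⟨fun _ => ⟨Homeomorph.refl _⟩, fun ⟨e⟩ => ⟨e.symm⟩, fun ⟨e⟩ ⟨f⟩ => ⟨e.trans f⟩⟩

lemma class_le (x : Set J1) : #{y : Set J1 // Nonempty (Be (U x) ≃ₜ Be (U y))} ≤ 𝔠 := by
  let c : {y : Set J1 // Nonempty (Be (U x) ≃ₜ Be (U y))} → Sy → Set Sy := fun y s =>
    {t | y.2.some (ι (U x) t) ∈ star (U y.1) (Cone s)}
  have hc : Function.Injective c := by
    intro y y' hyy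
    by_contra hne
    have hne' : y.1 ≠ y'.1 := fun h => hne (Subtype.ext h)
    obtain ⟨A, h1, h2⟩ := U_diff hne'
    let e := y.2.some
    let e' := y'.2.some
    have heq : ∀ s, e ⁻¹' (star (U y.1) (Cone s)) = e' ⁻¹' (star (U y'.1) (Cone s)) := by
      intro s
      have ht : ∀ t, e (ι (U x) t) ∈ star (U y.1) (Cone s) ↔
          e' (ι (U x) t) ∈ star (U y'.1) (Cone s) := fun t => Set.ext_iff.1 (congrFun hyy s) t
      have c1 : IsClopen (e ⁻¹' (star (U y.1) (Cone s))) :=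
        (star_clopen _).preimage e.continuous
      have c2 : IsClopen (e' ⁻¹' (star (U y'.1) (Cone s))) :=
        (star_clopen _).preimage e'.continuous
      exact (sub_of_trace c1.isOpen c2.isClosed fun t => (ht t).1).antisymm
        (sub_of_trace c2.isOpen c1.isClosed fun t => (ht t).2)
    refine no_cone_homeo (U_np y.1) (U_np y'.1) h1 h2 (e.symm.trans e') ?_
    intro s z
    have := Set.ext_iff.1 (heq s) (e.symm z)
    simpa using this
  refine (Cardinal.mk_le_of_injective hc).trans ?_
  have : #(Sy → Set Sy) = (2 ^ #Sy) ^ #Sy := by simp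
  rw [this]
  have hS : #Sy ≤ ℵ₀ := Cardinal.mk_le_aleph0
  calc ((2 : Cardinal) ^ #Sy) ^ #Sy = 2 ^ (#Sy * #Sy) := by rw [Cardinal.power_mul]
    _ ≤ 2 ^ ℵ₀ := Cardinal.power_le_power_left (by simp)
        ((mul_le_mul' hS hS).trans (by simp))
    _ = 𝔠 := by simp

lemma card_quot : #(Quotient rel) = 2 ^ 𝔠 := by
  have hJ : #(Set J1) = 2 ^ 𝔠 := by
    rw [Cardinal.mk_set, card_half]
  apply le_antisymm
  · rw [← hJ]
    exact Cardinal.mk_quotient_le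
  · by_contra hlt
    rw [not_le] at hlt
    have h1 : #(Set J1) = Cardinal.sum fun q : Quotient rel =>
        #{y : Set J1 // (⟦y⟧ : Quotient rel) = q} := by
      rw [← Cardinal.mk_sigma]
      exact Cardinal.mk_congr (Equiv.sigmaFiberEquiv _).symm
    have h2 : ∀ q : Quotient rel, #{y : Set J1 // (⟦y⟧ : Quotient rel) = q} ≤ 𝔠 := by
      intro q
      have hm : ∀ y : {y : Set J1 // (⟦y⟧ : Quotient rel) = q},
          Nonempty (Be (U q.out) ≃ₜ Be (U y.1)) := by
        intro y
        have : (⟦q.out⟧ : Quotient rel) = ⟦y.1⟧ := by rw [y.2, Quotient.out_eq]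
        exact Quotient.exact this
      refine le_trans (Cardinal.mk_le_of_injective (f := fun y => ⟨y.1, hm y⟩) ?_) (class_le q.out)
      intro y y' h
      exact Subtype.ext (by simpa using h)
    have h3 : #(Set J1) ≤ #(Quotient rel) * 𝔠 := by
      rw [h1]
      refine (Cardinal.sum_le_sum _ (fun _ => 𝔠) h2).trans ?_
      simp
    have h4 : #(Quotient rel) * 𝔠 < 2 ^ 𝔠 :=
      Cardinal.mul_lt_of_lt (Cardinal.aleph0_le_continuum.trans (Cardinal.cantor _).le) hlt
        (Cardinal.cantor _)
    rw [hJ] at h3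
    exact absurd h3 (not_le.2 h4)

end RigidED

/-- There exists a family `(X i)_{i ∈ I}` of compact Hausdorff spaces with `|I| = 2 ^ 𝔠`
(where `𝔠 = 2 ^ ℵ₀` is the cardinality of the continuum) such that each `X i` is separable,
extremally disconnected, and rigid (the identity is the only self-homeomorphism of `X i`),
and for distinct `i, j ∈ I` the spaces `X i` and `X j` are not homeomorphic. -/
theorem statement18 :
    ∃ (I : Type u) (X : I → CompHaus.{u}),
      #I = 2 ^ Cardinal.continuum ∧
      (∀ i, SeparableSpace (X i)) ∧
      (∀ i, ExtremallyDisconnected (X i)) ∧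
      (∀ i, ∀ e : X i ≃ₜ X i, e = Homeomorph.refl (X i)) ∧
      ∀ i j, i ≠ j → IsEmpty (X i ≃ₜ X j) := by
  let X : ULift.{u} (Quotient RigidED.rel) → CompHaus.{u} := fun i =>
    CompHaus.of (ULift.{u} (RigidED.Be (RigidED.U i.down.out)))
  let up : ∀ i, RigidED.Be (RigidED.U i.down.out) ≃ₜ X i := fun i => Homeomorph.ulift.symm
  refine ⟨ULift.{u} (Quotient RigidED.rel), X, ?_, ?_, ?_, ?_, ?_⟩
  · rw [Cardinal.mk_uLift, RigidED.card_quot]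
    simp
  · intro i
    exact (up i).surjective.denseRange.separableSpace (up i).continuous
  · intro i
    exact extremallyDisconnected_of_homeo (up i)
  · intro i e
    have := RigidED.rigid (RigidED.U_np _) (RigidED.U_gen _) (((up i).trans e).trans (up i).symm)
    ext x
    have h2 := congrArg (fun k => up i (k ((up i).symm x))) this
    simpa using h2
  · intro i j hij
    refine ⟨fun e => hij ?_⟩
    have : RigidED.rel.r i.down.out j.down.out := ⟨((up i).trans e).trans (up j).symm⟩
    have h2 := Quotient.sound (s := RigidED.rel) this
    rw [Quotient.out_eq, Quotient.out_eq] at h2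
    exact ULift.ext _ _ h2
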